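/- arXiv:1206.1892 — 3 statements merged into one kernel-verified Lean document; each statement's English description precedes it below -/
import Mathlib

section
/- Let L ⊂ Z^s be a homogeneous lattice of rank s−1 generated as a Z-module by the rows of an integral m×s matrix A. Then deg S/I(L) = d_1 ⋯ d_{s−1}, where d_1,…,d_{s−1} are the invariant factors of A (the positive diagonal entries of the Smith normal form of A, with d_i dividing d_{i+1}). -/
open MvPolynomial

/-- The binomial `t^{a⁺} - t^{a⁻}` associated to an integer vector `a ∈ ℤ^s`,
where `a⁺` and `a⁻` are the positive and negative parts of `a`. -/
noncomputable def latticeBinomial (K : Type*) [Field K] {s : ℕ} (a : Fin s → ℤ) :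
    MvPolynomial (Fin s) K :=
  (∏ i, X i ^ (a i).toNat) - ∏ i, X i ^ (-(a i)).toNat

/-- The lattice ideal `I(L) = ({t^{a⁺} - t^{a⁻} : a ∈ L})` of a lattice `L ⊆ ℤ^s`. -/
noncomputable def latticeIdeal (K : Type*) [Field K] {s : ℕ} (L : AddSubgroup (Fin s → ℤ)) :
    Ideal (MvPolynomial (Fin s) K) :=
  Ideal.span {f | ∃ a ∈ L, f = latticeBinomial K a}

/-- The Hilbert function `H_I(d) = dim_K S_d / I_d` of `S/I`, where `S_d` is the space of
homogeneous polynomials of degree `d` (together with `0`) and `I_d = I ∩ S_d`. -/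
noncomputable def hilbertFunction {K : Type*} [Field K] {s : ℕ}
    (I : Ideal (MvPolynomial (Fin s) K)) (d : ℕ) : ℕ :=
  Module.finrank K
    (↥(homogeneousSubmodule (Fin s) K d) ⧸
      (Submodule.comap (homogeneousSubmodule (Fin s) K d).subtype (Submodule.restrictScalars K I)))

/-- The map from exponent vectors to integer vectors. -/
def expToInt (s : ℕ) : (Fin s →₀ ℕ) →+ (Fin s → ℤ) where
  toFun a := fun i => (a i : ℤ)
  map_zero' := by ext; simp
  map_add' a b := by ext; simp

lemma prod_X_eq_monomial (K : Type*) [Field K] {s : ℕ} (f : Fin s → ℕ) :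
    (∏ i, (X i : MvPolynomial (Fin s) K) ^ f i) = monomial (Finsupp.equivFunOnFinite.symm f) 1 := by
  rw [monomial_eq, Finsupp.prod_fintype _ _ (by simp)]
  simp

lemma monomial_sub_mem {K : Type*} [Field K] {s : ℕ} {L : AddSubgroup (Fin s → ℤ)}
    (a b : Fin s →₀ ℕ) (c : K) (h : expToInt s a - expToInt s b ∈ L) :
    monomial a c - monomial b c ∈ latticeIdeal K L := by
  have h1 : latticeBinomial K (expToInt s a - expToInt s b) ∈ latticeIdeal K L :=
    Ideal.subset_span ⟨_, h, rfl⟩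
  have h2 := Ideal.mul_mem_left _ (monomial (a ⊓ b) c) h1
  convert h2 using 1
  unfold latticeBinomial
  rw [prod_X_eq_monomial, prod_X_eq_monomial, mul_sub, monomial_mul, monomial_mul]
  simp only [mul_one]
  congr 3
  · ext i
    simp [expToInt]
    omega
  · ext i
    simp [expToInt]
    omega

/-- Dimension count, given a finite group classifying the cosets of `L` in each degree. -/
lemma hilbert_eq_card {K : Type*} [Field K] {s : ℕ} (L : AddSubgroup (Fin s → ℤ))
    {G : Type*} [AddCommGroup G] [Fintype G] (φ : (Fin s → ℤ) →+ G)
    (hL0 : ∀ v ∈ L, φ v = 0)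
    (hker : ∀ v, ∑ i, v i = 0 → φ v = 0 → v ∈ L) (d : ℕ)
    (hsurj : ∀ g : G, ∃ a : Fin s →₀ ℕ, a.degree = d ∧ φ (expToInt s a) = g) :
    hilbertFunction (latticeIdeal K L) d = Fintype.card G := by
  choose σ hσd hσ using hsurj
  let Ψ : MvPolynomial (Fin s) K →ₐ[K] AddMonoidAlgebra K G :=
    AddMonoidAlgebra.mapDomainAlgHom K K (φ.comp (expToInt s))
  have hΨ : ∀ a c, Ψ (monomial a c) = AddMonoidAlgebra.single (φ (expToInt s a)) c := by
    intro a c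
    exact AddMonoidAlgebra.mapDomain_single
  let Θ : AddMonoidAlgebra K G →ₗ[K] MvPolynomial (Fin s) K :=
    AddMonoidAlgebra.mapDomainLinearMap K K σ
  have hΘ : ∀ g c, Θ (AddMonoidAlgebra.single g c) = monomial (σ g) c := by
    intro g c
    exact AddMonoidAlgebra.mapDomain_single
  have hI : ∀ f ∈ latticeIdeal K L, Ψ f = 0 := by
    have : latticeIdeal K L ≤ RingHom.ker Ψ := by
      unfold latticeIdeal
      rw [Ideal.span_le]
      rintro f ⟨a, ha, rfl⟩
      simp only [SetLike.mem_coe, RingHom.mem_ker]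
      unfold latticeBinomial
      rw [prod_X_eq_monomial, prod_X_eq_monomial, map_sub, hΨ, hΨ, sub_eq_zero]
      congr 1
      rw [← sub_eq_zero, ← map_sub]
      convert hL0 a ha
      ext i
      simp [expToInt]
    intro f hf
    exact this hf
  have hmod : ∀ f ∈ homogeneousSubmodule (Fin s) K d, f - Θ (Ψ f) ∈ latticeIdeal K L := by
    intro f hf
    rw [mem_homogeneousSubmodule] at hf
    have e : f - Θ (Ψ f) = ∑ v ∈ f.support,
        (monomial v (coeff v f) - monomial (σ (φ (expToInt s v))) (coeff v f)) := by
      rw [Finset.sum_sub_distrib, ← as_sum f]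
      congr 1
      conv_lhs => rw [as_sum f]
      rw [map_sum, map_sum]
      exact Finset.sum_congr rfl fun v _ => by rw [hΨ, hΘ]
    rw [e]
    refine Ideal.sum_mem _ fun v hv => monomial_sub_mem _ _ _ (hker _ ?_ ?_)
    · have h1 : v.degree = d := by
        have := hf (mem_support_iff.1 hv)
        rwa [Finsupp.degree_eq_weight_one]
      have h2 := hσd (φ (expToInt s v))
      rw [Finsupp.degree_eq_sum] at h1 h2
      simp only [Pi.sub_apply, Finset.sum_sub_distrib, expToInt, AddMonoidHom.coe_mk, ZeroHom.coe_mk]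
      simp only [expToInt, AddMonoidHom.coe_mk, ZeroHom.coe_mk] at h2
      rw [← Nat.cast_sum, ← Nat.cast_sum, h1, h2, sub_self]
    · rw [map_sub, hσ, sub_self]
  let Φ : homogeneousSubmodule (Fin s) K d →ₗ[K] AddMonoidAlgebra K G :=
    Ψ.toLinearMap ∘ₗ (homogeneousSubmodule (Fin s) K d).subtype
  have hkerΦ : Submodule.comap (homogeneousSubmodule (Fin s) K d).subtype
      (Submodule.restrictScalars K (latticeIdeal K L)) = LinearMap.ker Φ := by
    ext ⟨f, hf⟩
    simp only [Submodule.mem_comap, Submodule.subtype_apply, Submodule.restrictScalars_mem,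
      LinearMap.mem_ker]
    constructor
    · exact hI f
    · intro h
      have h' : Ψ f = 0 := h
      have := hmod f hf
      rwa [h', map_zero, sub_zero] at this
  have hΦs : Function.Surjective Φ := by
    intro x
    induction x using AddMonoidAlgebra.induction_linear with
    | zero => exact ⟨0, map_zero _⟩
    | add x y hx hy =>
      obtain ⟨p, rfl⟩ := hx
      obtain ⟨q, rfl⟩ := hy
      exact ⟨p + q, map_add _ _ _⟩
    | single g c =>
      refine ⟨⟨monomial (σ g) c, ?_⟩, ?_⟩
      · rw [mem_homogeneousSubmodule]
        exact isHomogeneous_monomial _ (hσd g)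
      · change Ψ (monomial (σ g) c) = _
        rw [hΨ, hσ]
  unfold hilbertFunction
  rw [hkerΦ, (Φ.quotKerEquivOfSurjective hΦs).finrank_eq,
    (AddMonoidAlgebra.coeffLinearEquiv K (S := K) (M := G)).finrank_eq]
  simp

lemma exists_bound {s : ℕ} (hs : 0 < s) {G : Type*} [AddCommGroup G] [Fintype G]
    (φ : (Fin s → ℤ) →+ G)
    (hsurj : ∀ g : G, ∃ v : Fin s → ℤ, ∑ i, v i = 0 ∧ φ v = g) :
    ∃ N : ℕ, ∀ d ≥ N, ∀ g : G, ∃ a : Fin s →₀ ℕ, a.degree = d ∧ φ (expToInt s a) = g := by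
  choose σ hσ0 hσ using hsurj
  obtain ⟨M, hM⟩ : ∃ M : ℕ, ∀ g i, -(M : ℤ) ≤ σ g i := by
    refine ⟨∑ g, ∑ i, (σ g i).natAbs, fun g i => ?_⟩
    have h1 : (σ g i).natAbs ≤ ∑ i, (σ g i).natAbs :=
      Finset.single_le_sum (f := fun i => (σ g i).natAbs) (fun _ _ => Nat.zero_le _)
        (Finset.mem_univ i)
    have h2 : ∑ i, (σ g i).natAbs ≤ ∑ g, ∑ i, (σ g i).natAbs :=
      Finset.single_le_sum (f := fun g => ∑ i, (σ g i).natAbs) (fun _ _ => Nat.zero_le _)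
        (Finset.mem_univ g)
    omega
  refine ⟨s * M, fun d hd g => ?_⟩
  let b : Fin s → ℤ := fun i => (M : ℤ) + if i = ⟨0, hs⟩ then ((d - s * M : ℕ) : ℤ) else 0
  have hb : ∀ i, (M : ℤ) ≤ b i := by
    intro i
    simp only [b]
    split_ifs <;> omega
  have hbs : ∑ i, b i = d := by
    simp only [b, Finset.sum_add_distrib, Finset.sum_ite_eq', Finset.mem_univ, if_true,
      Finset.sum_const, Finset.card_univ, Fintype.card_fin, nsmul_eq_mul]
    rw [Nat.cast_sub hd]
    push_cast
    ring
  let w : Fin s → ℤ := b + σ (g - φ b)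
  have hw : ∀ i, 0 ≤ w i := by
    intro i
    have := hb i
    have := hM (g - φ b) i
    simp only [w, Pi.add_apply]
    omega
  have he : expToInt s (Finsupp.equivFunOnFinite.symm fun i => (w i).toNat) = w := by
    ext i
    simp [expToInt, hw i]
  refine ⟨Finsupp.equivFunOnFinite.symm fun i => (w i).toNat, ?_, ?_⟩
  · rw [Finsupp.degree_eq_sum]
    zify
    simp only [Finsupp.equivFunOnFinite_symm_apply_apply, Int.toNat_of_nonneg (hw _)]
    simp only [w, Pi.add_apply, Finset.sum_add_distrib, hbs, hσ0, add_zero]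
  · rw [he]
    simp only [w, map_add, hσ]
    abel

/-- Theorem: let `L ⊆ ℤ^s` be a homogeneous lattice of rank `s-1` generated by the rows of an
integral `m × s` matrix `A`.  If `D = UAV` is the Smith normal form of `A` (with `U, V`
unimodular and diagonal entries `d_1 ∣ d_2 ∣ ⋯ ∣ d_{s-1} > 0`, the invariant factors of `A`),
then the degree of `S/I(L)` (the eventual constant value of its Hilbert function) is
`d_1 ⋯ d_{s-1}`. -/
theorem degree_latticeIdeal_eq_prod_invariantFactors
    (K : Type*) [Field K] {s m : ℕ} (hs : 0 < s)
    (A : Matrix (Fin m) (Fin s) ℤ) (L : AddSubgroup (Fin s → ℤ))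
    (hL : L = AddSubgroup.closure (Set.range fun i : Fin m => A i))
    (hhom : ∀ a ∈ L, ∑ i, a i = 0)
    (hrank : Module.finrank ℤ L = s - 1)
    (U : Matrix (Fin m) (Fin m) ℤ) (V : Matrix (Fin s) (Fin s) ℤ)
    (hU : IsUnit U.det) (hV : IsUnit V.det)
    (dvec : ℕ → ℤ)
    (hpos : ∀ k, k < s - 1 → 0 < dvec k)
    (hdvd : ∀ k, k + 1 < s - 1 → dvec k ∣ dvec (k + 1))
    (hSmith : ∀ i j, (U * A * V) i j =
      if (i : ℕ) = (j : ℕ) ∧ (j : ℕ) < s - 1 then dvec (j : ℕ) else 0) :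
    ∃ N : ℕ, ∀ d ≥ N, (hilbertFunction (latticeIdeal K L) d : ℤ) =
      ∏ k ∈ Finset.range (s - 1), dvec k := by
  obtain ⟨n, rfl⟩ : ∃ n, s = n + 1 := ⟨s - 1, by omega⟩
  simp only [Nat.add_sub_cancel] at *
  -- `n ≤ m`
  have hnm : n ≤ m := by
    have h1 : Module.finrank ℤ L = Set.finrank ℤ (Set.range fun i : Fin m => A i) := by
      rw [Set.finrank, hL]
      have : (Submodule.span ℤ (Set.range fun i : Fin m => A i)).toAddSubgroup
          = AddSubgroup.closure (Set.range fun i : Fin m => A i) :=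
        Submodule.span_int_eq_addSubgroupClosure _
      rw [← this]
      rfl
    have h2 := finrank_range_le_card (R := ℤ) (fun i : Fin m => A i)
    rw [← h1, hrank, Fintype.card_fin] at h2
    exact h2
  have hVW : V * V⁻¹ = 1 := Matrix.mul_nonsing_inv V hV
  have hWV : V⁻¹ * V = 1 := Matrix.nonsing_inv_mul V hV
  have hUU : U⁻¹ * U = 1 := Matrix.nonsing_inv_mul U hU
  have hAL : ∀ i, A i ∈ L := fun i => by
    rw [hL]; exact AddSubgroup.subset_closure ⟨i, rfl⟩
  have hUA : ∀ i, (U * A) i ∈ L := fun i => by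
    have : (U * A) i = ∑ j, U i j • A j := by
      ext k
      simp [Matrix.mul_apply]
    rw [this]
    exact AddSubgroup.sum_mem _ fun j _ => AddSubgroup.zsmul_mem _ (hAL j) _
  -- rows of `U * A` in the new coordinates
  have hrow : ∀ k : Fin n, (U * A) (Fin.castLE hnm k) = dvec k • V⁻¹ k.castSucc := by
    intro k
    have : U * A = (U * A * V) * V⁻¹ := by rw [Matrix.mul_assoc, hVW, Matrix.mul_one]
    ext l
    rw [this, Matrix.mul_apply, Finset.sum_eq_single k.castSucc]
    · rw [hSmith]; simp
    · intro j _ hj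
      rw [hSmith, if_neg, zero_mul]
      rintro ⟨h, -⟩
      apply hj
      ext
      simpa using h.symm
    · simp
  let c : Fin (n + 1) → ℤ := fun j => ∑ l, V⁻¹ j l
  have hsum : ∀ w : Fin (n + 1) → ℤ, ∑ l, Matrix.vecMul w V⁻¹ l = ∑ j, w j * c j := by
    intro w
    simp only [Matrix.vecMul, dotProduct, c, Finset.mul_sum]
    exact Finset.sum_comm
  have hc0 : ∀ k : Fin n, c k.castSucc = 0 := by
    intro k
    have h := hhom _ (hUA (Fin.castLE hnm k))
    rw [hrow] at h
    simp only [Pi.smul_apply, smul_eq_mul, ← Finset.mul_sum] at h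
    exact (mul_eq_zero.1 h).resolve_left (hpos k k.2).ne'
  have hsum' : ∀ w : Fin (n + 1) → ℤ,
      ∑ l, Matrix.vecMul w V⁻¹ l = w (Fin.last n) * c (Fin.last n) := by
    intro w
    rw [hsum, Fin.sum_univ_castSucc]
    simp [hc0]
  have hback : ∀ v : Fin (n + 1) → ℤ, Matrix.vecMul (Matrix.vecMul v V) V⁻¹ = v := by
    intro v
    rw [Matrix.vecMul_vecMul, hVW, Matrix.vecMul_one]
  have hcl : c (Fin.last n) ≠ 0 := by
    intro h
    have := hsum' (Matrix.vecMul (Pi.single 0 1) V)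
    rw [hback, h, mul_zero] at this
    simp at this
  have hlast : ∀ v : Fin (n + 1) → ℤ, ∑ i, v i = 0 → Matrix.vecMul v V (Fin.last n) = 0 := by
    intro v hv
    have := hsum' (Matrix.vecMul v V)
    rw [hback, hv] at this
    exact (mul_eq_zero.1 this.symm).resolve_right hcl
  have hne : ∀ k : Fin n, NeZero (dvec k).toNat := fun k => ⟨by have := hpos k k.2; omega⟩
  let G := (k : Fin n) → ZMod (dvec k).toNat
  let φ : (Fin (n + 1) → ℤ) →+ G :=
    { toFun := fun v k => ((Matrix.vecMul v V k.castSucc : ℤ) : ZMod (dvec k).toNat)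
      map_zero' := by funext k; simp; rfl
      map_add' := by intro a b; funext k; simp [Matrix.add_vecMul]; rfl }
  have hφ : ∀ v, φ v = 0 ↔ ∀ k : Fin n, dvec k ∣ Matrix.vecMul v V k.castSucc := by
    intro v
    rw [funext_iff]
    refine forall_congr' fun k => ?_
    change ((Matrix.vecMul v V k.castSucc : ℤ) : ZMod (dvec k).toNat) = 0 ↔ _
    rw [ZMod.intCast_zmod_eq_zero_iff_dvd, Int.toNat_of_nonneg (hpos k k.2).le]
  have hL0 : ∀ v ∈ L, φ v = 0 := by
    have : L ≤ φ.ker := by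
      rw [hL, AddSubgroup.closure_le]
      rintro _ ⟨i, rfl⟩
      change φ (A i) = 0
      rw [hφ]
      intro k
      have e : A * V = U⁻¹ * (U * A * V) := by
        rw [Matrix.mul_assoc U, ← Matrix.mul_assoc, hUU, Matrix.one_mul]
      have e2 : Matrix.vecMul (A i) V k.castSucc = (A * V) i k.castSucc := rfl
      rw [e2, e, Matrix.mul_apply]
      refine Finset.dvd_sum fun j _ => Dvd.dvd.mul_left ?_ _
      rw [hSmith]
      split_ifs
      · simp
      · simp
    exact fun v hv => this hv
  have hker : ∀ v, ∑ i, v i = 0 → φ v = 0 → v ∈ L := by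
    intro v hv h
    rw [hφ] at h
    choose q hq using h
    have : v = ∑ k : Fin n, q k • (U * A) (Fin.castLE hnm k) := by
      conv_lhs => rw [← hback v]
      ext l
      simp only [hrow, Matrix.vecMul, dotProduct, Finset.sum_apply, Pi.smul_apply, smul_eq_mul]
      rw [Fin.sum_univ_castSucc]
      have h0 := hlast v hv
      simp only [Matrix.vecMul, dotProduct] at h0 hq
      rw [h0, zero_mul, add_zero]
      refine Finset.sum_congr rfl fun k _ => ?_
      rw [hq]
      ring
    rw [this]
    exact AddSubgroup.sum_mem _ fun j _ => AddSubgroup.zsmul_mem _ (hUA _) _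
  have hsurj : ∀ g : G, ∃ v : Fin (n + 1) → ℤ, ∑ i, v i = 0 ∧ φ v = g := by
    intro g
    let w : Fin (n + 1) → ℤ := Fin.snoc (α := fun _ => ℤ) (fun k : Fin n => ((g k).val : ℤ)) 0
    refine ⟨Matrix.vecMul w V⁻¹, ?_, ?_⟩
    · rw [hsum']
      simp [w]
    · funext k
      change ((Matrix.vecMul (Matrix.vecMul w V⁻¹) V k.castSucc : ℤ) : ZMod (dvec k).toNat) = _
      rw [Matrix.vecMul_vecMul, hWV, Matrix.vecMul_one]
      simp [w]
  obtain ⟨N, hN⟩ := exists_bound hs φ hsurj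
  refine ⟨N, fun d hd => ?_⟩
  rw [hilbert_eq_card L φ hL0 hker d (hN d hd)]
  simp only [G, Fintype.card_pi, ZMod.card]
  rw [Finset.prod_range]
  push_cast
  exact Finset.prod_congr rfl fun k _ => Int.toNat_of_nonneg (hpos k k.2).le
end

section
/- Let L ⊂ Z^s be a lattice and I(L) its lattice ideal. If g_1, …, g_r are binomials g_k = t^{a_k} − t^{b_k} that generate I(L), then L is generated as a group by the vectors a_1 − b_1, …, a_r − b_r. In particular, if an ideal of S is a lattice ideal, there is a unique lattice L ⊂ Z^s such that it equals I(L). -/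
open MvPolynomial

/-- The map `S → K[ℤ^s / M]` sending `t_i` to the class of `e_i`. -/
noncomputable def quotMap (K : Type*) [Field K] {s : ℕ} (M : AddSubgroup (Fin s → ℤ)) :
    MvPolynomial (Fin s) K →ₐ[K] AddMonoidAlgebra K ((Fin s → ℤ) ⧸ M) :=
  aeval fun i => AddMonoidAlgebra.single (QuotientAddGroup.mk' M (Pi.single i 1)) 1

lemma quotMap_monomial (K : Type*) [Field K] {s : ℕ} (M : AddSubgroup (Fin s → ℤ))
    (n : Fin s → ℕ) :
    quotMap K M (∏ i, X i ^ n i) =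
      AddMonoidAlgebra.single (QuotientAddGroup.mk' M (fun i => (n i : ℤ))) 1 := by
  have h1 : (fun i => (n i : ℤ)) = ∑ i, n i • (Pi.single i 1 : Fin s → ℤ) := by
    ext j
    simp [Finset.sum_apply, Pi.single_apply]
  have h2 : ∀ (t : Finset (Fin s)),
      quotMap K M (∏ i ∈ t, X i ^ n i) = AddMonoidAlgebra.single
        (QuotientAddGroup.mk' M (∑ i ∈ t, n i • (Pi.single i 1 : Fin s → ℤ))) 1 := by
    intro t
    induction t using Finset.induction_on with
    | empty =>
      rw [Finset.prod_empty, Finset.sum_empty, map_one, map_zero]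
      rfl
    | insert i t hi ih =>
      rw [Finset.prod_insert hi, Finset.sum_insert hi, map_mul, ih, map_pow, map_add, map_nsmul]
      simp only [quotMap, aeval_X]
      rw [AddMonoidAlgebra.single_pow, AddMonoidAlgebra.single_mul_single]
      simp
  rw [h1, h2]

lemma quotMap_binomial (K : Type*) [Field K] {s : ℕ} (M : AddSubgroup (Fin s → ℤ))
    (a b : Fin s → ℕ) :
    quotMap K M ((∏ i, X i ^ a i) - ∏ i, X i ^ b i) = 0 ↔
      (fun i => (a i : ℤ) - (b i : ℤ)) ∈ M := by
  rw [map_sub, quotMap_monomial, quotMap_monomial, sub_eq_zero,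
    AddMonoidAlgebra.single_left_inj one_ne_zero, eq_comm]
  simp only [QuotientAddGroup.mk'_apply]
  rw [QuotientAddGroup.eq, neg_add_eq_sub]
  rfl

lemma quotMap_latticeBinomial (K : Type*) [Field K] {s : ℕ} (M : AddSubgroup (Fin s → ℤ))
    (c : Fin s → ℤ) : quotMap K M (latticeBinomial K c) = 0 ↔ c ∈ M := by
  rw [latticeBinomial, quotMap_binomial]
  have : (fun i => ((c i).toNat : ℤ) - ((-(c i)).toNat : ℤ)) = c := by
    ext i
    exact Int.toNat_sub_toNat_neg (c i)
  rw [this]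

lemma latticeIdeal_le_ker (K : Type*) [Field K] {s : ℕ} (L : AddSubgroup (Fin s → ℤ)) :
    latticeIdeal K L ≤ RingHom.ker (quotMap K L) := by
  refine Ideal.span_le.2 ?_
  rintro _ ⟨c, hc, rfl⟩
  exact (quotMap_latticeBinomial K L c).2 hc

lemma le_of_latticeIdeal_le_ker (K : Type*) [Field K] {s : ℕ} (L M : AddSubgroup (Fin s → ℤ))
    (h : latticeIdeal K L ≤ RingHom.ker (quotMap K M)) : L ≤ M := fun c hc =>
  (quotMap_latticeBinomial K M c).1 (h (Ideal.subset_span ⟨c, hc, rfl⟩))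

/-- Lemma: let `L ⊆ ℤ^s` be a lattice and `I(L)` its lattice ideal.  If the binomials
`g_k = t^{a_k} - t^{b_k}`, `k = 1, …, r`, generate `I(L)`, then `L` is generated as a group
by the vectors `ĝ_k = a_k - b_k`.  In particular, if an ideal is a lattice ideal, there is a
unique lattice `L` with the ideal equal to `I(L)`. -/
theorem lattice_eq_closure_of_binomial_generators
    (K : Type*) [Field K] {s r : ℕ} (L : AddSubgroup (Fin s → ℤ))
    (a b : Fin r → Fin s → ℕ)
    (hgen : latticeIdeal K L = Ideal.span (Set.range fun k : Fin r =>
      ((∏ i, X i ^ a k i) - ∏ i, X i ^ b k i : MvPolynomial (Fin s) K))) :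
    L = AddSubgroup.closure (Set.range fun k : Fin r =>
        (fun i => (a k i : ℤ) - (b k i : ℤ))) ∧
      ∀ L' : AddSubgroup (Fin s → ℤ),
        (latticeIdeal K L' : Ideal (MvPolynomial (Fin s) K)) = latticeIdeal K L → L' = L := by
  refine ⟨le_antisymm ?_ ?_, fun L' h => le_antisymm ?_ ?_⟩
  · apply le_of_latticeIdeal_le_ker K
    rw [hgen]
    refine Ideal.span_le.2 ?_
    rintro _ ⟨k, rfl⟩
    exact (quotMap_binomial K _ (a k) (b k)).2 (AddSubgroup.subset_closure ⟨k, rfl⟩)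
  · rw [AddSubgroup.closure_le]
    rintro _ ⟨k, rfl⟩
    refine (quotMap_binomial K L (a k) (b k)).1 (latticeIdeal_le_ker K L ?_)
    rw [hgen]
    exact Ideal.subset_span ⟨k, rfl⟩
  · exact le_of_latticeIdeal_le_ker K _ _ (h.trans_le (latticeIdeal_le_ker K L))
  · exact le_of_latticeIdeal_le_ker K _ _ (h.symm.trans_le (latticeIdeal_le_ker K L'))
end

section
/- Let L be a binomial ideal of S = K[t_1,…,t_s]. Then L is a lattice ideal (i.e., L = I(𝓛) for some lattice 𝓛 ⊂ Z^s) if and only if t_i is a non-zerodivisor on S/L for every i = 1, …, s. -/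
open MvPolynomial

section Helpers

variable (K : Type*) [Field K] {s : ℕ}

/-- The monomial `t^a`. -/
noncomputable def tmon (a : Fin s → ℕ) : MvPolynomial (Fin s) K := ∏ i, X i ^ a i

lemma tmon_add (a b : Fin s → ℕ) : tmon K (a + b) = tmon K a * tmon K b := by
  simp [tmon, pow_add, Finset.prod_mul_distrib]

lemma monomial_eq_tmon (m : Fin s →₀ ℕ) : monomial m (1 : K) = tmon K m := by
  rw [monomial_eq, tmon, Finsupp.prod_fintype _ _ (by simp)]
  simp

/-- `t^a - t^b` factors through the lattice binomial of `a - b`. -/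
lemma tmon_sub (a b : Fin s → ℕ) :
    tmon K a - tmon K b = tmon K (fun i => min (a i) (b i)) *
      latticeBinomial K (fun i => (a i : ℤ) - b i) := by
  have h1 : a = (fun i => min (a i) (b i)) + (fun i => ((a i : ℤ) - b i).toNat) := by
    funext i; simp only [Pi.add_apply]; omega
  have h2 : b = (fun i => min (a i) (b i)) + (fun i => (-((a i : ℤ) - b i)).toNat) := by
    funext i; simp only [Pi.add_apply]; omega
  have e1 := tmon_add K (fun i => min (a i) (b i)) (fun i => ((a i : ℤ) - b i).toNat)
  have e2 := tmon_add K (fun i => min (a i) (b i)) (fun i => (-((a i : ℤ) - b i)).toNat)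
  rw [← h1] at e1
  rw [← h2] at e2
  rw [e1, e2, ← mul_sub]
  rfl

lemma tmon_sub_mem (L : AddSubgroup (Fin s → ℤ)) (a b : Fin s → ℕ)
    (h : (fun i => (a i : ℤ) - b i) ∈ L) : tmon K a - tmon K b ∈ latticeIdeal K L := by
  rw [tmon_sub]
  exact Ideal.mul_mem_left _ _ (Ideal.subset_span ⟨_, h, rfl⟩)

/-- The map `S → K[ℤ^s / L]`. -/
noncomputable def toGrp (L : AddSubgroup (Fin s → ℤ)) :
    MvPolynomial (Fin s) K →ₐ[K] AddMonoidAlgebra K ((Fin s → ℤ) ⧸ L) :=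
  aeval (fun i => AddMonoidAlgebra.single
    (QuotientAddGroup.mk' L (Pi.single i (1 : ℤ))) (1 : K))

lemma toGrp_tmon (L : AddSubgroup (Fin s → ℤ)) (a : Fin s → ℕ) :
    toGrp K L (tmon K a) =
      AddMonoidAlgebra.single (QuotientAddGroup.mk' L (fun i => (a i : ℤ))) (1 : K) := by
  have key : ∀ (t : Finset (Fin s)) (g : Fin s → ((Fin s → ℤ) ⧸ L)),
      ∏ i ∈ t, (AddMonoidAlgebra.single (g i) (1 : K)) =
        AddMonoidAlgebra.single (∑ i ∈ t, g i) (1 : K) := by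
    intro t g
    induction t using Finset.induction_on with
    | empty => simp [AddMonoidAlgebra.one_def]
    | insert i t hi ih =>
      rw [Finset.prod_insert hi, Finset.sum_insert hi, ih,
        AddMonoidAlgebra.single_mul_single, one_mul]
  rw [tmon, map_prod]
  simp only [map_pow, toGrp, aeval_X, AddMonoidAlgebra.single_pow, one_pow]
  rw [key]
  congr 1
  simp only [← map_nsmul]
  rw [← map_sum]
  congr 1
  funext j
  simp [Finset.sum_apply, Pi.single_apply]

lemma latticeIdeal_le_ker_s12 (L : AddSubgroup (Fin s → ℤ)) (f : MvPolynomial (Fin s) K)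
    (hf : f ∈ latticeIdeal K L) : toGrp K L f = 0 := by
  have : latticeIdeal K L ≤ RingHom.ker (toGrp K L) := by
    refine Ideal.span_le.2 ?_
    rintro _ ⟨a, ha, rfl⟩
    change toGrp K L (tmon K (fun i => (a i).toNat) - tmon K (fun i => (-(a i)).toNat)) = 0
    rw [map_sub, toGrp_tmon, toGrp_tmon, sub_eq_zero]
    congr 1
    rw [← sub_eq_zero, ← map_sub, QuotientAddGroup.mk'_apply, QuotientAddGroup.eq_zero_iff]
    convert ha using 1
    funext i
    simp only [Pi.sub_apply]
    omega
  exact this hf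

open Classical in
lemma ker_le_latticeIdeal (L : AddSubgroup (Fin s → ℤ)) (f : MvPolynomial (Fin s) K)
    (hf : toGrp K L f = 0) : f ∈ latticeIdeal K L := by
  let q : (Fin s → ℕ) → ((Fin s → ℤ) ⧸ L) := fun a =>
    QuotientAddGroup.mk' L (fun i => (a i : ℤ))
  let v : ((Fin s → ℤ) ⧸ L) → (MvPolynomial (Fin s) K ⧸ latticeIdeal K L) := fun g =>
    if h : ∃ a, q a = g then Ideal.Quotient.mk _ (tmon K h.choose) else 0
  let ψ : AddMonoidAlgebra K ((Fin s → ℤ) ⧸ L) →ₗ[K]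
      (MvPolynomial (Fin s) K ⧸ latticeIdeal K L) :=
    (Finsupp.linearCombination K v) ∘ₗ (AddMonoidAlgebra.coeffLinearEquiv K).toLinearMap
  have hψ : ψ ∘ₗ (toGrp K L).toLinearMap = (Ideal.Quotient.mkₐ K (latticeIdeal K L)).toLinearMap := by
    apply MvPolynomial.linearMap_ext
    intro m
    ext
    simp only [LinearMap.comp_apply, AlgHom.toLinearMap_apply]
    rw [monomial_eq_tmon, toGrp_tmon]
    have h : ∃ a, q a = q m := ⟨m, rfl⟩
    have e : ψ (AddMonoidAlgebra.single (q m) (1 : K)) = v (q m) := by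
      simp [ψ, AddMonoidAlgebra.coeffLinearEquiv]
    refine e.trans ?_
    simp only [v, dif_pos h]
    refine Ideal.Quotient.eq.2 (tmon_sub_mem K L _ _ ?_)
    have hc := h.choose_spec
    simp only [q] at hc
    rw [← sub_eq_zero, ← map_sub, QuotientAddGroup.mk'_apply,
      QuotientAddGroup.eq_zero_iff] at hc
    exact hc
  have := LinearMap.congr_fun hψ f
  simp only [LinearMap.comp_apply, AlgHom.toLinearMap_apply, hf, map_zero] at this
  exact Ideal.Quotient.eq_zero_iff_mem.1 this.symm

lemma mem_of_X_mul_mem (L : AddSubgroup (Fin s → ℤ)) (i : Fin s) (f : MvPolynomial (Fin s) K)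
    (hf : X i * f ∈ latticeIdeal K L) : f ∈ latticeIdeal K L := by
  apply ker_le_latticeIdeal
  have h := latticeIdeal_le_ker_s12 K L _ hf
  rw [map_mul] at h
  have h2 : toGrp K L (X i) = AddMonoidAlgebra.single
    (QuotientAddGroup.mk' L (Pi.single i (1 : ℤ))) (1 : K) := by simp [toGrp]
  rw [h2] at h
  have h3 := congrArg (fun z => AddMonoidAlgebra.single
    (-(QuotientAddGroup.mk' L (Pi.single i (1 : ℤ)))) (1 : K) * z) h
  simp only [← mul_assoc, AddMonoidAlgebra.single_mul_single, neg_add_cancel, mul_one,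
    mul_zero] at h3
  rwa [← AddMonoidAlgebra.one_def, one_mul] at h3

/-- The lattice of a binomial ideal. -/
def idealLattice (I : Ideal (MvPolynomial (Fin s) K)) : AddSubgroup (Fin s → ℤ) where
  carrier := {c | ∃ a b : Fin s → ℕ, (c = fun i => (a i : ℤ) - b i) ∧ tmon K a - tmon K b ∈ I}
  zero_mem' := ⟨0, 0, by funext i; simp, by simp⟩
  add_mem' := by
    rintro _ _ ⟨a, b, rfl, h⟩ ⟨c, d, rfl, h'⟩
    refine ⟨a + c, b + d, ?_, ?_⟩
    · funext i
      simp only [Pi.add_apply]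
      push_cast
      ring
    · have : tmon K (a + c) - tmon K (b + d) =
        tmon K c * (tmon K a - tmon K b) + tmon K b * (tmon K c - tmon K d) := by
        rw [tmon_add, tmon_add]; ring
      rw [this]
      exact I.add_mem (I.mul_mem_left _ h) (I.mul_mem_left _ h')
  neg_mem' := by
    rintro _ ⟨a, b, rfl, h⟩
    refine ⟨b, a, ?_, ?_⟩
    · funext i
      simp
    · rw [← neg_sub]
      exact I.neg_mem h

end Helpers

/-- Theorem: let `L` be a binomial ideal of `S = K[t_1,…,t_s]` (an ideal generated by
binomials `t^a - t^b` with `a, b ∈ ℕ^s`).  Then `L` is a lattice ideal (i.e. `L = I(𝓛)` for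
some lattice `𝓛 ⊆ ℤ^s`) if and only if each variable `t_i` is a non-zerodivisor on `S/L`. -/
theorem binomial_ideal_is_lattice_ideal_iff_X_nonZeroDivisors
    (K : Type*) [Field K] {s : ℕ}
    (L : Ideal (MvPolynomial (Fin s) K))
    (hbin : ∃ G : Set (MvPolynomial (Fin s) K), L = Ideal.span G ∧
      ∀ g ∈ G, ∃ a b : Fin s → ℕ, g = (∏ i, X i ^ a i) - ∏ i, X i ^ b i) :
    (∃ 𝓛 : AddSubgroup (Fin s → ℤ), L = latticeIdeal K 𝓛) ↔
      ∀ i : Fin s, Ideal.Quotient.mk L (X i) ∈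
        nonZeroDivisors (MvPolynomial (Fin s) K ⧸ L) := by
  constructor
  · rintro ⟨M, rfl⟩ i
    rw [mem_nonZeroDivisors_iff_right]
    intro z hz
    obtain ⟨f, rfl⟩ := Ideal.Quotient.mk_surjective z
    rw [← map_mul, Ideal.Quotient.eq_zero_iff_mem] at hz
    rw [Ideal.Quotient.eq_zero_iff_mem]
    exact mem_of_X_mul_mem K M i f (by rwa [mul_comm])
  · intro hX
    obtain ⟨G, hG, hb⟩ := hbin
    refine ⟨idealLattice K L, le_antisymm ?_ ?_⟩
    · conv_lhs => rw [hG]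
      refine Ideal.span_le.2 fun g hg => ?_
      obtain ⟨a, b, rfl⟩ := hb g hg
      refine tmon_sub_mem K _ a b ⟨a, b, rfl, ?_⟩
      rw [hG]
      exact Ideal.subset_span hg
    · refine Ideal.span_le.2 ?_
      rintro _ ⟨_, ⟨a, b, rfl, h⟩, rfl⟩
      rw [tmon_sub] at h
      have hm : Ideal.Quotient.mk L (tmon K (fun i => min (a i) (b i))) ∈
          nonZeroDivisors (MvPolynomial (Fin s) K ⧸ L) := by
        rw [tmon, map_prod]
        refine Submonoid.prod_mem _ fun i _ => ?_
        rw [map_pow]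
        exact Submonoid.pow_mem _ (hX i) _
      rw [← Ideal.Quotient.eq_zero_iff_mem, map_mul, mul_comm] at h
      exact Ideal.Quotient.eq_zero_iff_mem.1 ((mem_nonZeroDivisors_iff_right.1 hm) _ h)
end
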